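/- For every integer d ≥ 1, the integral C_d = ∫_{ℝ^d} |f_d(x)| / (1 + ‖x‖^{2d}) dx is finite; consequently, for every Schwartz function φ on ℝ^d, |∫_{ℝ^d} f_d(x) φ(x) dx| ≤ C_d · sup_{x∈ℝ^d} |(1 + ‖x‖^{2d}) φ(x)|, so f_d defines a tempered distribution. -/

import Mathlib

/-!
Write `δ = 2 - d/2`. Folding the negative half-line onto the positive one turns the principal
value into an absolutely convergent integral: for `x > 0` and `δ < 2`,
`Ei δ x = ∫_0^∞ (1_{t ≤ x} e^t - e^{-t}) t^{-δ} dt` (`Ei_eq_integral`), since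
`e^t - e^{-t} = O(t)` at `0` compensates the singularity.

In polar coordinates with the substitution `s = r²`, integrability of `|f_d| / (1 + ‖x‖^{2d})` on
`ℝ^d` becomes integrability of `e^{-s} Ei δ s / (1 + s^d)` on `(0, ∞)`: the powers of `r` cancel
exactly. Inserting the integral for `Ei` and exchanging the order of integration, and using that
`1 / (1 + s^d)` is decreasing, the absolute double integral is at most
`∫_0^∞ (e^{-t} t^{d/2-1} + 2 t^{d/2-1} / (1 + t^d)) dt < ∞`
(`integral_norm_weightedKernel_le`). Fubini's theorem then also supplies measurability
(`integrableOn_weighted_Ei`).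

The bound for Schwartz functions is the pointwise estimate
`|f_d φ| ≤ |f_d| / (1 + ‖x‖^{2d}) * sup |(1 + ‖x‖^{2d}) φ|`, the supremum being finite.
-/

open MeasureTheory Filter Topology

/-- The `δ`-exponential integral `Ei^{(δ)}(x)`, defined for `x > 0` (and `δ < 2`) as the
principal value `lim_{ε→0⁺} (∫_{-∞}^{-ε} e^t/t^δ dt + ∫_ε^x e^t/t^δ dt)`, where `t^δ` means
`-|t|^δ` for negative `t`. -/
noncomputable def Ei (δ x : ℝ) : ℝ :=
  limUnder (𝓝[>] (0:ℝ)) (fun ε =>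
    (∫ t in Set.Iic (-ε), Real.exp t / (-(|t| ^ δ))) + ∫ t in ε..x, Real.exp t / t ^ δ)

/-- The function `f_d(x) = ‖x‖^{2−d} e^{−‖x‖²} Ei^{(2−d/2)}(‖x‖²)` on `ℝ^d`. -/
noncomputable def fd (d : ℕ) (x : EuclideanSpace ℝ (Fin d)) : ℝ :=
  ‖x‖ ^ ((2:ℝ) - d) * Real.exp (-‖x‖ ^ 2) * Ei (2 - (d:ℝ)/2) (‖x‖ ^ 2)

/-- The integrand on `(0, ∞)` whose absolutely convergent integral is `Ei δ x`: the original
integrand `e^t / t^δ` on `(0, x]` combined with the reflection of its part on the negative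
half-line. -/
noncomputable def eiKernel (δ x t : ℝ) : ℝ :=
  ((if t ≤ x then Real.exp t else 0) - Real.exp (-t)) / t ^ δ

/-! ### The principal value as an absolutely convergent integral -/

lemma abs_exp_sub_exp_neg_le {t : ℝ} (ht : 0 < t) :
    |Real.exp t - Real.exp (-t)| ≤ 2 * t * Real.exp t := by
  have h1 : Real.exp (-t) ≤ Real.exp t := Real.exp_le_exp.2 (by linarith)
  have h2 : Real.exp (-t) = Real.exp t * Real.exp (-2 * t) := by
    rw [← Real.exp_add]; congr 1; ring
  have h3 := Real.add_one_le_exp (-2 * t)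
  rw [abs_of_nonneg (by linarith), h2]
  nlinarith [Real.exp_pos t]

lemma rpow_one_sub_eq {t : ℝ} (ht : 0 < t) (δ : ℝ) : t ^ (1 - δ) = t / t ^ δ := by
  rw [Real.rpow_sub ht, Real.rpow_one]

lemma measurable_eiKernel (δ : ℝ) : Measurable fun p : ℝ × ℝ => eiKernel δ p.1 p.2 := by
  unfold eiKernel
  refine Measurable.div (Measurable.sub (Measurable.ite ?_ ?_ ?_) ?_) ?_
  · exact measurableSet_le measurable_snd measurable_fst
  all_goals fun_prop

lemma abs_eiKernel_of_le {δ x t : ℝ} (ht : 0 < t) (h : t ≤ x) :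
    |eiKernel δ x t| ≤ 2 * Real.exp t * t ^ (1 - δ) := by
  have hp : 0 < t ^ δ := Real.rpow_pos_of_pos ht δ
  rw [eiKernel, if_pos h, abs_div, abs_of_pos hp, rpow_one_sub_eq ht, mul_div_assoc',
    div_le_div_iff_of_pos_right hp]
  linarith [abs_exp_sub_exp_neg_le ht]

lemma abs_eiKernel_of_lt {δ x t : ℝ} (ht : 0 < t) (h : x < t) :
    |eiKernel δ x t| = Real.exp (-t) / t ^ δ := by
  have hp : 0 < t ^ δ := Real.rpow_pos_of_pos ht δ
  rw [eiKernel, if_neg (not_le.2 h), abs_div, abs_of_pos hp, zero_sub, abs_neg, Real.abs_exp]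

lemma integrableOn_exp_neg_mul_rpow {δ : ℝ} (hδ : δ < 2) :
    IntegrableOn (fun t => Real.exp (-t) * t ^ (1 - δ)) (Set.Ioi 0) := by
  have := Real.GammaIntegral_convergent (s := 2 - δ) (by linarith)
  convert this using 4
  ring

lemma integrableOn_eiKernel {δ x : ℝ} (hδ : δ < 2) (hx : 0 < x) :
    IntegrableOn (eiKernel δ x) (Set.Ioi 0) := by
  refine Integrable.mono'
    ((integrableOn_exp_neg_mul_rpow hδ).const_mul (2 * Real.exp (2 * x) + x⁻¹)) ?_ ?_
  · exact ((measurable_eiKernel δ).comp (by fun_prop : Measurable fun t : ℝ => (x, t))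
      ).aestronglyMeasurable
  · refine (ae_restrict_iff' measurableSet_Ioi).2 (Eventually.of_forall fun t ht => ?_)
    have ht : 0 < t := ht
    have hp : 0 < t ^ (1 - δ) := Real.rpow_pos_of_pos ht _
    rw [Real.norm_eq_abs]
    rcases le_or_gt t x with h | h
    · refine (abs_eiKernel_of_le ht h).trans ?_
      have h1 : Real.exp t ≤ Real.exp (2 * x) * Real.exp (-t) := by
        rw [← Real.exp_add]; exact Real.exp_le_exp.2 (by linarith)
      calc 2 * Real.exp t * t ^ (1 - δ)
          ≤ 2 * (Real.exp (2 * x) * Real.exp (-t)) * t ^ (1 - δ) := by gcongr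
        _ = (2 * Real.exp (2 * x)) * (Real.exp (-t) * t ^ (1 - δ)) := by ring
        _ ≤ _ := by
          gcongr
          have := inv_pos.2 hx
          linarith
    · rw [abs_eiKernel_of_lt ht h]
      have h1 : 1 ≤ x⁻¹ * t := by
        rw [inv_mul_eq_div, le_div_iff₀ hx]; linarith
      calc Real.exp (-t) / t ^ δ = 1 * (Real.exp (-t) / t ^ δ) := by ring
        _ ≤ (x⁻¹ * t) * (Real.exp (-t) / t ^ δ) := by gcongr
        _ = x⁻¹ * (Real.exp (-t) * t ^ (1 - δ)) := by rw [rpow_one_sub_eq ht]; ring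
        _ ≤ _ := by
          gcongr
          have := Real.exp_pos (2 * x)
          linarith

lemma integrableOn_exp_neg_div_rpow {δ ε : ℝ} (hδ : δ < 2) (hε : 0 < ε) :
    IntegrableOn (fun t => Real.exp (-t) / t ^ δ) (Set.Ioi ε) := by
  refine Integrable.mono' (((integrableOn_exp_neg_mul_rpow hδ).mono_set
    (Set.Ioi_subset_Ioi hε.le)).const_mul ε⁻¹) ?_ ?_
  · exact (by fun_prop : Measurable fun t : ℝ => Real.exp (-t) / t ^ δ).aestronglyMeasurable
  · refine (ae_restrict_iff' measurableSet_Ioi).2 (Eventually.of_forall fun t ht => ?_)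
    have ht : ε < t := ht
    have ht0 : 0 < t := hε.trans ht
    have hp : 0 < t ^ δ := Real.rpow_pos_of_pos ht0 _
    have h1 : 1 ≤ ε⁻¹ * t := by
      rw [inv_mul_eq_div, le_div_iff₀ hε]; linarith
    rw [Real.norm_eq_abs, abs_of_pos (by positivity)]
    calc Real.exp (-t) / t ^ δ = 1 * (Real.exp (-t) / t ^ δ) := by ring
      _ ≤ (ε⁻¹ * t) * (Real.exp (-t) / t ^ δ) := by gcongr
      _ = ε⁻¹ * (Real.exp (-t) * t ^ (1 - δ)) := by rw [rpow_one_sub_eq ht0]; ring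

lemma truncated_Ei_eq {δ x ε : ℝ} (hδ : δ < 2) (hε : 0 < ε) (hεx : ε < x) :
    (∫ t in Set.Iic (-ε), Real.exp t / (-(|t| ^ δ))) + ∫ t in ε..x, Real.exp t / t ^ δ
      = ∫ t in Set.Ioi ε, eiKernel δ x t := by
  have hx : 0 < x := hε.trans hεx
  have hB := integrableOn_exp_neg_div_rpow hδ hε
  have hK := (integrableOn_eiKernel hδ hx).mono_set (Set.Ioi_subset_Ioi hε.le)
  have hsum : ∀ t, eiKernel δ x t + Real.exp (-t) / t ^ δ
      = (Set.Iic x).indicator (fun t => Real.exp t / t ^ δ) t := by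
    intro t
    by_cases h : t ≤ x
    · rw [Set.indicator_of_mem (by exact h), eiKernel, if_pos h]; ring
    · rw [Set.indicator_of_notMem (by exact h), eiKernel, if_neg h]; ring
  have h1 : ∫ t in Set.Iic (-ε), Real.exp t / (-(|t| ^ δ))
      = -∫ t in Set.Ioi ε, Real.exp (-t) / t ^ δ := by
    rw [← integral_comp_neg_Ioi ε (fun t => Real.exp t / (-(|t| ^ δ))), ← integral_neg]
    refine setIntegral_congr_fun measurableSet_Ioi fun t ht => ?_
    have ht0 : 0 < t := hε.trans ht
    simp only [abs_neg, abs_of_pos ht0, div_neg]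
  have h2 : ∫ t in ε..x, Real.exp t / t ^ δ
      = (∫ t in Set.Ioi ε, eiKernel δ x t) + ∫ t in Set.Ioi ε, Real.exp (-t) / t ^ δ := by
    rw [← integral_add hK hB]
    simp only [hsum]
    rw [setIntegral_indicator measurableSet_Iic, Set.Ioi_inter_Iic,
      intervalIntegral.integral_of_le hεx.le]
  rw [h1, h2]
  ring

lemma Ei_eq_integral {δ x : ℝ} (hδ : δ < 2) (hx : 0 < x) :
    Ei δ x = ∫ t in Set.Ioi 0, eiKernel δ x t := by
  refine Tendsto.limUnder_eq ?_
  have hcov : AECover (volume.restrict (Set.Ioi (0:ℝ))) (𝓝[>] (0:ℝ)) (fun ε => Set.Ioi ε) :=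
    aecover_Ioi_of_Ioi (tendsto_id.mono_left nhdsWithin_le_nhds)
  refine (hcov.integral_tendsto_of_countably_generated (integrableOn_eiKernel hδ hx)).congr' ?_
  filter_upwards [Ioo_mem_nhdsGT hx] with ε hε
  rw [truncated_Ei_eq hδ hε.1 hε.2, Measure.restrict_restrict measurableSet_Ioi,
    Set.inter_eq_left.2 (Set.Ioi_subset_Ioi hε.1.le)]

/-! ### Integrability of the weighted exponential integral -/

/-- The kernel whose `t`-integral over `(0, ∞)` is `e^{-s} Ei δ s / (1 + s^d)`. -/
noncomputable def weightedKernel (d : ℕ) (δ : ℝ) (p : ℝ × ℝ) : ℝ :=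
  Real.exp (-p.1) / (1 + p.1 ^ d) * eiKernel δ p.1 p.2

lemma measurable_weightedKernel (d : ℕ) (δ : ℝ) : Measurable (weightedKernel d δ) :=
  Measurable.mul (by fun_prop) (measurable_eiKernel δ)

/-- A majorant of `s ↦ |weightedKernel d δ (s, t)|`: for `s < t` only the reflected part is present
and `e^{-s} / (1 + s^d) ≤ 1`, while for `s ≥ t` the weight is at most `1 / (1 + t^d)`. -/
noncomputable def sectionBound (d : ℕ) (δ t s : ℝ) : ℝ :=
  (Set.Iio t).indicator (fun _ => Real.exp (-t) / t ^ δ) s +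
    (Set.Ici t).indicator
      (fun s => 2 * Real.exp t * t ^ (1 - δ) / (1 + t ^ d) * Real.exp (-s)) s

lemma norm_weightedKernel_le (d : ℕ) (δ : ℝ) {s t : ℝ} (hs : 0 < s) (ht : 0 < t) :
    ‖weightedKernel d δ (s, t)‖ ≤ sectionBound d δ t s := by
  have hw : 0 < Real.exp (-s) / (1 + s ^ d) := by positivity
  have hp : 0 < t ^ δ := Real.rpow_pos_of_pos ht _
  have hp1 : 0 < t ^ (1 - δ) := Real.rpow_pos_of_pos ht _
  simp only [weightedKernel, sectionBound, norm_mul, Real.norm_eq_abs, abs_of_pos hw]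
  rcases lt_or_ge s t with h | h
  · rw [Set.indicator_of_mem (by exact h), Set.indicator_of_notMem (by simpa using h),
      abs_eiKernel_of_lt ht h, add_zero]
    refine mul_le_of_le_one_left (by positivity) ?_
    rw [div_le_one (by positivity)]
    have h1 : Real.exp (-s) ≤ 1 := Real.exp_le_one_iff.2 (by linarith)
    have h2 : 0 < s ^ d := by positivity
    linarith
  · rw [Set.indicator_of_notMem (by simpa using h), Set.indicator_of_mem (by exact h), zero_add]
    calc Real.exp (-s) / (1 + s ^ d) * |eiKernel δ s t|
        ≤ Real.exp (-s) / (1 + t ^ d) * (2 * Real.exp t * t ^ (1 - δ)) := by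
          gcongr
          exact abs_eiKernel_of_le ht h
      _ = _ := by ring

lemma integrableOn_sectionBound (d : ℕ) (δ : ℝ) {t : ℝ} (ht : 0 < t) :
    IntegrableOn (sectionBound d δ t) (Set.Ioi 0) ∧
      ∫ s in Set.Ioi 0, sectionBound d δ t s
        = Real.exp (-t) * t ^ (1 - δ) + 2 * (t ^ (1 - δ) / (1 + t ^ d)) := by
  have hI1 : IntegrableOn ((Set.Iio t).indicator (fun _ => Real.exp (-t) / t ^ δ))
      (Set.Ioi 0) := by
    rw [IntegrableOn, integrable_indicator_iff measurableSet_Iio, IntegrableOn,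
      Measure.restrict_restrict measurableSet_Iio, Set.Iio_inter_Ioi]
    exact integrableOn_const (by simp)
  have hsub : Set.Ioi (0:ℝ) ∩ Set.Ici t = Set.Ici t :=
    Set.inter_eq_right.2 fun s hs => lt_of_lt_of_le ht hs
  have hI2 : IntegrableOn ((Set.Ici t).indicator
      (fun s => 2 * Real.exp t * t ^ (1 - δ) / (1 + t ^ d) * Real.exp (-s))) (Set.Ioi 0) := by
    rw [IntegrableOn, integrable_indicator_iff measurableSet_Ici, IntegrableOn,
      Measure.restrict_restrict measurableSet_Ici, Set.inter_comm, hsub]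
    exact ((integrableOn_Ici_iff_integrableOn_Ioi).2 (integrableOn_exp_neg_Ioi t)).const_mul _
  refine ⟨hI1.add hI2, ?_⟩
  simp only [sectionBound]
  rw [integral_add hI1 hI2, setIntegral_indicator measurableSet_Iio,
    setIntegral_indicator measurableSet_Ici, hsub, Set.Ioi_inter_Iio, setIntegral_const,
    integral_const_mul, integral_Ici_eq_integral_Ioi, integral_exp_neg_Ioi]
  have hE : Real.exp t * Real.exp (-t) = 1 := by rw [← Real.exp_add]; simp
  simp only [Measure.real, Real.volume_Ioo, sub_zero, ENNReal.toReal_ofReal ht.le, smul_eq_mul]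
  rw [rpow_one_sub_eq ht]
  linear_combination (2 * (t / t ^ δ) / (1 + t ^ d)) * hE

lemma integral_norm_weightedKernel_le (d : ℕ) (δ : ℝ) {t : ℝ} (ht : 0 < t) :
    Integrable (fun s => weightedKernel d δ (s, t)) (volume.restrict (Set.Ioi 0)) ∧
      ∫ s in Set.Ioi 0, ‖weightedKernel d δ (s, t)‖
        ≤ Real.exp (-t) * t ^ (1 - δ) + 2 * (t ^ (1 - δ) / (1 + t ^ d)) := by
  obtain ⟨hI, hE⟩ := integrableOn_sectionBound d δ ht
  have hle : ∀ᵐ s ∂(volume.restrict (Set.Ioi (0:ℝ))),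
      ‖weightedKernel d δ (s, t)‖ ≤ sectionBound d δ t s :=
    (ae_restrict_iff' measurableSet_Ioi).2
      (Eventually.of_forall fun s hs => norm_weightedKernel_le d δ hs ht)
  have hint : Integrable (fun s => weightedKernel d δ (s, t)) (volume.restrict (Set.Ioi 0)) :=
    Integrable.mono' hI ((measurable_weightedKernel d δ).comp
      (by fun_prop : Measurable fun s : ℝ => (s, t))).aestronglyMeasurable hle
  exact ⟨hint, (integral_mono_ae hint.norm hI hle).trans_eq hE⟩

lemma integrableOn_rpow_div_one_add_pow {d : ℕ} (hd : 1 ≤ d) :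
    IntegrableOn (fun t : ℝ => t ^ ((d:ℝ) / 2 - 1) / (1 + t ^ d)) (Set.Ioi 0) := by
  have hd0 : (0:ℝ) < d := by exact_mod_cast hd
  have hm : Measurable fun t : ℝ => t ^ ((d:ℝ) / 2 - 1) / (1 + t ^ d) := by fun_prop
  rw [← Set.Ioc_union_Ioi_eq_Ioi zero_le_one]
  refine IntegrableOn.union ?_ ?_
  · have h := (intervalIntegrable_iff_integrableOn_Ioc_of_le zero_le_one).1
      (intervalIntegral.intervalIntegrable_rpow' (a := 0) (b := 1) (r := (d:ℝ) / 2 - 1)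
        (by linarith))
    refine Integrable.mono' h hm.aestronglyMeasurable
      ((ae_restrict_iff' measurableSet_Ioc).2 (Eventually.of_forall fun t ht => ?_))
    have ht0 : 0 < t := ht.1
    rw [Real.norm_eq_abs, abs_of_pos (by positivity)]
    refine div_le_self (by positivity) ?_
    have : 0 < t ^ d := by positivity
    linarith
  · have h := integrableOn_Ioi_rpow_of_lt (a := -(d:ℝ) / 2 - 1) (by linarith) one_pos
    refine Integrable.mono' h hm.aestronglyMeasurable
      ((ae_restrict_iff' measurableSet_Ioi).2 (Eventually.of_forall fun t ht => ?_))
    have ht0 : 0 < t := one_pos.trans ht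
    rw [Real.norm_eq_abs, abs_of_pos (by positivity), div_le_iff₀ (by positivity)]
    have h1 : t ^ ((d:ℝ) / 2 - 1) = t ^ (-(d:ℝ) / 2 - 1) * t ^ d := by
      rw [← Real.rpow_natCast t d, ← Real.rpow_add ht0]; congr 1; ring
    rw [h1]
    gcongr
    linarith

lemma integrableOn_weighted_Ei {d : ℕ} (hd : 1 ≤ d) :
    IntegrableOn (fun s : ℝ => Real.exp (-s) / (1 + s ^ d) * Ei (2 - (d:ℝ) / 2) s)
      (Set.Ioi 0) := by
  have hd0 : (0:ℝ) < d := by exact_mod_cast hd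
  set δ : ℝ := 2 - (d:ℝ) / 2 with hδdef
  have hδ : δ < 2 := by linarith
  have hexp : 1 - δ = (d:ℝ) / 2 - 1 := by rw [hδdef]; ring
  have hm := (measurable_weightedKernel d δ).aestronglyMeasurable
    (μ := (volume.restrict (Set.Ioi (0:ℝ))).prod (volume.restrict (Set.Ioi (0:ℝ))))
  have hprod : Integrable (weightedKernel d δ)
      ((volume.restrict (Set.Ioi (0:ℝ))).prod (volume.restrict (Set.Ioi (0:ℝ)))) := by
    refine (integrable_prod_iff' hm).2 ⟨?_, ?_⟩
    · exact (ae_restrict_iff' measurableSet_Ioi).2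
        (Eventually.of_forall fun t ht => (integral_norm_weightedKernel_le d δ ht).1)
    · have hb : Integrable
          (fun t : ℝ => Real.exp (-t) * t ^ (1 - δ) + 2 * (t ^ (1 - δ) / (1 + t ^ d)))
          (volume.restrict (Set.Ioi 0)) := by
        refine (integrableOn_exp_neg_mul_rpow hδ).add (Integrable.const_mul ?_ 2)
        rw [hexp]
        exact integrableOn_rpow_div_one_add_pow hd
      refine Integrable.mono' hb hm.norm.prod_swap.integral_prod_right' ?_
      refine (ae_restrict_iff' measurableSet_Ioi).2 (Eventually.of_forall fun t ht => ?_)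
      rw [Real.norm_eq_abs, abs_of_nonneg (integral_nonneg fun _ => norm_nonneg _)]
      exact (integral_norm_weightedKernel_le d δ ht).2
  refine hprod.integral_prod_left.congr
    ((ae_restrict_iff' measurableSet_Ioi).2 (Eventually.of_forall fun s hs => ?_))
  simp only [weightedKernel]
  rw [integral_const_mul, Ei_eq_integral hδ hs]

/-! ### Passage to `ℝ^d` -/

lemma integrable_abs_fd_div {d : ℕ} (hd : 1 ≤ d) :
    Integrable (fun x : EuclideanSpace ℝ (Fin d) => |fd d x| / (1 + ‖x‖ ^ (2 * d))) := by
  have : Nonempty (Fin d) := ⟨⟨0, hd⟩⟩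
  simp only [fd]
  refine (integrable_fun_norm_addHaar (E := EuclideanSpace ℝ (Fin d)) volume
    (f := fun r : ℝ => |r ^ ((2:ℝ) - d) * Real.exp (-r ^ 2) * Ei (2 - (d:ℝ) / 2) (r ^ 2)|
      / (1 + r ^ (2 * d)))).2 ?_
  have h := ((integrableOn_Ioi_comp_rpow_iff _ (two_ne_zero' ℝ)).2
    (integrableOn_weighted_Ei hd)).norm.const_mul (1 / 2)
  refine h.congr
    ((ae_restrict_iff' measurableSet_Ioi).2 (Eventually.of_forall fun r hr => ?_))
  have hr : 0 < r := hr
  have h1 : (2:ℝ) - 1 = 1 := by norm_num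
  have hpow : r ^ (d - 1) * r ^ ((2:ℝ) - d) = r := by
    rw [← Real.rpow_natCast r (d - 1), ← Real.rpow_add hr, Nat.cast_sub hd]
    convert Real.rpow_one r using 2
    push_cast
    ring
  have hq : 0 < r ^ ((2:ℝ) - d) := Real.rpow_pos_of_pos hr _
  have hw : 0 < Real.exp (-r ^ 2) / (1 + (r ^ 2) ^ d) := by positivity
  simp only [finrank_euclideanSpace_fin, smul_eq_mul, Real.norm_eq_abs, abs_mul, h1,
    Real.rpow_one, Real.rpow_two, abs_of_pos hr, abs_of_pos hq, abs_of_pos hw, Real.abs_exp,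
    abs_two, pow_mul]
  linear_combination
    (-Real.exp (-r ^ 2) * |Ei (2 - (d:ℝ) / 2) (r ^ 2)| / (1 + (r ^ 2) ^ d)) * hpow

lemma bddAbove_weight_mul_schwartz (d : ℕ) (φ : SchwartzMap (EuclideanSpace ℝ (Fin d)) ℝ) :
    BddAbove (Set.range fun x : EuclideanSpace ℝ (Fin d) => |(1 + ‖x‖ ^ (2 * d)) * φ x|) := by
  obtain ⟨C₁, -, h₁⟩ := φ.decay 0 0
  obtain ⟨C₂, -, h₂⟩ := φ.decay (2 * d) 0
  refine ⟨C₁ + C₂, ?_⟩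
  rintro _ ⟨x, rfl⟩
  have a := h₁ x
  have b := h₂ x
  simp only [norm_iteratedFDeriv_zero, pow_zero, one_mul, Real.norm_eq_abs] at a b
  have hw : 0 < 1 + ‖x‖ ^ (2 * d) := by positivity
  simp only [abs_mul, abs_of_pos hw]
  linarith

/-- For every `d ≥ 1`, the integral `C_d = ∫ |f_d(x)|/(1+‖x‖^{2d}) dx` is finite, and for
every Schwartz function `φ` one has
`|∫ f_d(x) φ(x) dx| ≤ C_d ⬝ sup_x |(1+‖x‖^{2d}) φ(x)|`; so `f_d` defines a tempered
distribution. -/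
theorem statement11 (d : ℕ) (hd : 1 ≤ d) :
    Integrable (fun x : EuclideanSpace ℝ (Fin d) => |fd d x| / (1 + ‖x‖ ^ (2 * d))) ∧
    ∀ φ : SchwartzMap (EuclideanSpace ℝ (Fin d)) ℝ,
      |∫ x : EuclideanSpace ℝ (Fin d), fd d x * φ x| ≤
        (∫ x : EuclideanSpace ℝ (Fin d), |fd d x| / (1 + ‖x‖ ^ (2 * d))) *
          ⨆ x : EuclideanSpace ℝ (Fin d), |(1 + ‖x‖ ^ (2 * d)) * φ x| := by
  refine ⟨integrable_abs_fd_div hd, fun φ => ?_⟩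
  rw [← integral_mul_const, ← Real.norm_eq_abs]
  refine norm_integral_le_of_norm_le ((integrable_abs_fd_div hd).mul_const _)
    (Eventually.of_forall fun x => ?_)
  have hw : 0 < 1 + ‖x‖ ^ (2 * d) := by positivity
  calc ‖fd d x * φ x‖
      = |fd d x| / (1 + ‖x‖ ^ (2 * d)) * |(1 + ‖x‖ ^ (2 * d)) * φ x| := by
        rw [norm_mul, abs_mul, abs_of_pos hw, Real.norm_eq_abs, Real.norm_eq_abs]
        field_simp
    _ ≤ _ := by
        gcongr
        exact le_ciSup (bddAbove_weight_mul_schwartz d φ) x
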